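/- For every integer r ≥ 0, the number of Dyck paths of height at most 2 having exactly r peaks of height 1 and exactly r peaks of height 2 equals (r+1)·s_r, where s_r is the number of little Schröder paths of semi-length r. -/

import Mathlib

/-- Schröder steps are encoded by `Fin 3`: `0` is an up step `u = (1,1)`,
`1` is a down step `d = (1,-1)`, and `2` is a horizontal step `h = (2,0)`. -/
def IsLargeSchroeder (l : List (Fin 3)) : Prop :=
  l.count 0 = l.count 1 ∧ ∀ p, p <+: l → p.count 1 ≤ p.count 0

/-- A little Schröder path: a large Schröder path with no horizontal step at
height `0`, i.e. every `h` step is preceded by strictly more `u`'s than `d`'s. -/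
def IsLittleSchroeder (l : List (Fin 3)) : Prop :=
  IsLargeSchroeder l ∧ ∀ p q, l = p ++ (2 : Fin 3) :: q → p.count 1 < p.count 0

/-- The semi-length of a Schröder word: number of `u` steps plus number of `h` steps. -/
def schroederSemiLength (l : List (Fin 3)) : ℕ := l.count 0 + l.count 2

/-- The step associated to a letter: `true` is an up step `+1`, `false` a down step `-1`. -/
def stepVal (b : Bool) : ℤ := if b then 1 else -1

/-- The total sum of the steps of a `±1` word given as a list. -/
def lsum (l : List Bool) : ℤ := (l.map stepVal).sum

/-- A Dyck path (of arbitrary length), as a list: total sum `0` and every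
prefix sum nonnegative. -/
def IsDyckList (l : List Bool) : Prop :=
  lsum l = 0 ∧ ∀ p, p <+: l → 0 ≤ lsum p

/-- The number of peaks of height `h` of the word `l`: occurrences of `ud`
whose up step ends at altitude `h`. -/
noncomputable def listPeakCount (l : List Bool) (h : ℤ) : ℕ :=
  Nat.card {pq : List Bool × List Bool //
    l = pq.1 ++ true :: false :: pq.2 ∧ lsum pq.1 + 1 = h}

def FS : ℕ → ℕ → ℕ → Finset (List (Fin 3))
  | 0, 0, 0 => {[]}
  | 0, 0, _ + 1 => ∅
  | 0, i + 1, k => (FS 1 i k).image (List.cons 0)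
  | a + 1, 0, 0 => (FS a 0 0).image (List.cons 1)
  | a + 1, 0, k + 1 => (FS a 0 (k + 1)).image (List.cons 1) ∪ (FS (a + 1) 0 k).image (List.cons 2)
  | a + 1, i + 1, 0 => (FS (a + 2) i 0).image (List.cons 0) ∪ (FS a (i + 1) 0).image (List.cons 1)
  | a + 1, i + 1, k + 1 => (FS (a + 2) i (k + 1)).image (List.cons 0) ∪
      ((FS a (i + 1) (k + 1)).image (List.cons 1) ∪ (FS (a + 1) (i + 1) k).image (List.cons 2))
termination_by a i k => a + 2 * i + k

theorem card_cons {α : Type*} [DecidableEq α] (c : α) (s : Finset (List α)) :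
    (s.image (List.cons c)).card = s.card :=
  Finset.card_image_of_injective _ (List.cons_injective)

theorem disj_cons {α : Type*} [DecidableEq α] (c d : α) (h : c ≠ d) (s t : Finset (List α)) :
    Disjoint (s.image (List.cons c)) (t.image (List.cons d)) := by
  rw [Finset.disjoint_left]
  intro x hx hy
  simp only [Finset.mem_image] at hx hy
  obtain ⟨_, _, rfl⟩ := hx
  obtain ⟨_, _, h2⟩ := hy
  simp at h2
  exact h h2.1.symm

def FC (a i k : ℕ) : ℕ := (FS a i k).card

theorem FC000 : FC 0 0 0 = 1 := by simp [FC, FS]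
theorem FC00 (k : ℕ) : FC 0 0 (k + 1) = 0 := by simp [FC, FS]
theorem FC0 (i k : ℕ) : FC 0 (i + 1) k = FC 1 i k := by
  simp only [FC]; rw [FS, card_cons]
theorem FCa00 (a : ℕ) : FC (a + 1) 0 0 = FC a 0 0 := by
  simp only [FC]; rw [FS, card_cons]
theorem FCa0k (a k : ℕ) : FC (a + 1) 0 (k + 1) = FC a 0 (k + 1) + FC (a + 1) 0 k := by
  simp only [FC]; rw [FS, Finset.card_union_of_disjoint (disj_cons _ _ (by decide) _ _), card_cons, card_cons]
theorem FCai0 (a i : ℕ) : FC (a + 1) (i + 1) 0 = FC (a + 2) i 0 + FC a (i + 1) 0 := by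
  simp only [FC]; rw [FS, Finset.card_union_of_disjoint (disj_cons _ _ (by decide) _ _), card_cons, card_cons]
theorem FCaik (a i k : ℕ) : FC (a + 1) (i + 1) (k + 1) =
    FC (a + 2) i (k + 1) + (FC a (i + 1) (k + 1) + FC (a + 1) (i + 1) k) := by
  simp only [FC]
  rw [FS, Finset.card_union_of_disjoint, Finset.card_union_of_disjoint (disj_cons _ _ (by decide) _ _), card_cons, card_cons, card_cons]
  rw [Finset.disjoint_union_right]
  exact ⟨disj_cons _ _ (by decide) _ _, disj_cons _ _ (by decide) _ _⟩

def RC (a i : ℕ) : ℕ → ℕ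
  | 0 => FC a i 0
  | k + 1 => FC a i (k + 1) + FC (a + 1) i k

noncomputable def GQ (a i k : ℕ) : ℚ :=
  (a + 1) * (a + 2 * i + k).factorial / (i.factorial * k.factorial * (a + 1 + i).factorial)

theorem GQ_i (i : ℕ) : GQ 0 (i + 1) 0 = GQ 1 i 0 := by
  simp only [GQ]
  rw [show 0 + 2 * (i + 1) + 0 = (2 * i + 1) + 1 by ring, show 0 + 1 + (i + 1) = i + 2 by ring, show 1 + 2 * i + 0 = 2 * i + 1 by ring,
    show 1 + 1 + i = i + 2 by ring]
  simp only [Nat.factorial_succ]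
  push_cast
  have : (i.factorial : ℚ) ≠ 0 := by positivity
  field_simp
  ring

theorem GQ_ik (i k : ℕ) : GQ 0 (i + 1) (k + 1) = GQ 1 i (k + 1) + GQ 0 (i + 1) k := by
  simp only [GQ]
  rw [show 0 + 2 * (i + 1) + (k + 1) = (2 * i + k + 2) + 1 by ring, show 0 + 1 + (i + 1) = i + 2 by ring,
    show 1 + 2 * i + (k + 1) = 2 * i + k + 2 by ring,
    show 0 + 2 * (i + 1) + k = 2 * i + k + 2 by ring,
    show 1 + 1 + i = i + 2 by ring]
  rw [Nat.factorial_succ (2 * i + k + 2)]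
  simp only [Nat.factorial_succ i, Nat.factorial_succ k]
  push_cast
  field_simp
  ring

theorem GQ_a0 (a : ℕ) : GQ a 0 0 = 1 := by
  simp only [GQ]
  simp only [Nat.factorial_succ, mul_zero, add_zero, Nat.factorial_zero]
  have : (a.factorial : ℚ) ≠ 0 := by positivity
  push_cast
  field_simp

theorem GQ_0k (k : ℕ) : GQ 0 0 k = 1 := by
  have : (k.factorial : ℚ) ≠ 0 := by positivity
  simp [GQ, this]

theorem GQ_ak (a k : ℕ) : GQ (a + 1) 0 (k + 1) = GQ a 0 (k + 1) + GQ (a + 1) 0 k := by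
  simp only [GQ]
  rw [show a + 1 + 2 * 0 + (k + 1) = (a + k + 1) + 1 by ring, 
    show a + 2 * 0 + (k + 1) = a + k + 1 by ring,
    show a + 1 + 2 * 0 + k = a + k + 1 by ring, Nat.factorial_succ (a + k + 1), add_zero, add_zero,
    Nat.factorial_succ (a + 1), Nat.factorial_succ k]
  push_cast
  field_simp
  ring

theorem GQ_ai (a i : ℕ) : GQ (a + 1) (i + 1) 0 = GQ (a + 2) i 0 + GQ a (i + 1) 0 := by
  simp only [GQ]
  rw [show a + 1 + 2 * (i + 1) + 0 = (a + 2 * i + 2) + 1 by ring, 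
    show a + 2 + 2 * i + 0 = a + 2 * i + 2 by ring,
    show a + 2 * (i + 1) + 0 = a + 2 * i + 2 by ring, Nat.factorial_succ (a + 2 * i + 2),
    show a + 1 + 1 + (i + 1) = (a + i + 2) + 1 by ring,
    show a + 2 + 1 + i = (a + i + 2) + 1 by ring,
    show a + 1 + (i + 1) = (a + i + 2) by ring,
    Nat.factorial_succ (a + i + 2), Nat.factorial_succ i]
  push_cast
  field_simp
  ring

theorem GQ_aik (a i k : ℕ) : GQ (a + 1) (i + 1) (k + 1) =
    GQ (a + 2) i (k + 1) + (GQ a (i + 1) (k + 1) + GQ (a + 1) (i + 1) k) := by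
  simp only [GQ]
  rw [show a + 1 + 2 * (i + 1) + (k + 1) = (a + 2 * i + k + 3) + 1 by ring, 
    show a + 2 + 2 * i + (k + 1) = a + 2 * i + k + 3 by ring,
    show a + 2 * (i + 1) + (k + 1) = a + 2 * i + k + 3 by ring,
    show a + 1 + 2 * (i + 1) + k = a + 2 * i + k + 3 by ring,
     Nat.factorial_succ (a + 2 * i + k + 3),
    show a + 1 + 1 + (i + 1) = (a + i + 2) + 1 by ring,
    show a + 2 + 1 + i = (a + i + 2) + 1 by ring,
    show a + 1 + (i + 1) = (a + i + 2) by ring,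
    Nat.factorial_succ (a + i + 2), Nat.factorial_succ i, Nat.factorial_succ k]
  push_cast
  field_simp
  ring

theorem FCa00' (a : ℕ) : FC a 0 0 = 1 := by
  induction a with
  | zero => exact FC000
  | succ a ih => rw [FCa00, ih]

theorem RC_0k (k : ℕ) : RC 0 0 k = 1 := by
  induction k with
  | zero => exact FC000
  | succ k ih =>
    cases k with
    | zero => simp [RC, FC00, FCa00']
    | succ k => simp only [RC, FC00, FCa0k, zero_add] at *; omega
theorem RC_i (i : ℕ) : RC 0 (i + 1) 0 = RC 1 i 0 := by simp [RC, FC0]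
theorem RC_ik (i k : ℕ) : RC 0 (i + 1) (k + 1) = RC 1 i (k + 1) + RC 0 (i + 1) k := by
  cases k with
  | zero => simp only [RC, FC0, FCai0, zero_add]; have h1 := FCai0 0 i; have h2 := FC0 i 0; norm_num at *; omega
  | succ k => simp only [RC, FC0, zero_add]; have h1 := FCaik 0 i k; have h2 := FC0 i (k+1); have h3 := FC0 i k; norm_num at *; omega
theorem RC_ak (a k : ℕ) : RC (a + 1) 0 (k + 1) = RC a 0 (k + 1) + RC (a + 1) 0 k := by
  cases k with
  | zero => simp only [RC, FCa0k, FCa00]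
  | succ k => simp only [RC, FCa0k]; try omega
theorem RC_ai (a i : ℕ) : RC (a + 1) (i + 1) 0 = RC (a + 2) i 0 + RC a (i + 1) 0 := by
  simp only [RC, FCai0]
theorem RC_aik (a i k : ℕ) : RC (a + 1) (i + 1) (k + 1) =
    RC (a + 2) i (k + 1) + (RC a (i + 1) (k + 1) + RC (a + 1) (i + 1) k) := by
  cases k with
  | zero =>
    have : FC (a + 2) (i + 1) 0 = FC (a + 3) i 0 + FC (a + 1) (i + 1) 0 := FCai0 (a+1) i
    have := FCaik a i 0
    simp only [RC] at *
    rw [show a + 2 + 1 = a + 3 by ring, show a + 1 + 1 = a + 2 by ring]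
    omega
  | succ k =>
    have := FCaik (a+1) i k
    rw [show a + 1 + 2 = a + 2 + 1 by ring] at this
    have := FCaik a i (k+1)
    simp only [RC] at *; omega

theorem RC_eq : ∀ (a i k : ℕ), (RC a i k : ℚ) = GQ a i k
  | 0, 0, k => by rw [RC_0k, GQ_0k]; simp
  | a, 0, 0 => by simp [RC, FCa00', GQ_a0]
  | 0, i + 1, 0 => by rw [RC_i, GQ_i, RC_eq]
  | 0, i + 1, k + 1 => by rw [RC_ik, GQ_ik, Nat.cast_add, RC_eq, RC_eq]
  | a + 1, 0, k + 1 => by rw [RC_ak, GQ_ak, Nat.cast_add, RC_eq, RC_eq]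
  | a + 1, i + 1, 0 => by rw [RC_ai, GQ_ai, Nat.cast_add, RC_eq, RC_eq]
  | a + 1, i + 1, k + 1 => by
      rw [RC_aik, GQ_aik, Nat.cast_add, Nat.cast_add, RC_eq, RC_eq, RC_eq]
termination_by a i k => a + 2 * i + k

theorem FC_closed (k : ℕ) : ∀ j : ℕ, (j + k + 2) * FC 0 (j + 1) k =
    (j + k).choose j * (j + k + j + 2).choose (j + 1) := by
  induction k with
  | zero =>
    intro j
    have h := RC_eq 0 (j + 1) 0
    simp only [RC] at h
    qify
    rw [h, Nat.cast_choose ℚ (show j ≤ j + 0 by omega), Nat.cast_choose ℚ (show j + 1 ≤ j + 0 + j + 2 by omega)]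
    simp only [GQ]
    rw [show 0 + 2 * (j + 1) + 0 = 2 * j + 2 by ring, show j + 0 + j + 2 - (j + 1) = j + 1 by omega,
      show 0 + 1 + (j + 1) = j + 1 + 1 by ring, show j + 0 - j = 0 by omega,
      show j + 0 + j + 2 = 2 * j + 2 by ring, Nat.factorial_succ (j + 1)]
    simp
    field_simp
    ring
  | succ k ih =>
    intro j
    have h := RC_eq 0 (j + 1) (k + 1)
    have h2 := ih (j + 1)
    simp only [RC] at h
    rw [FC0 (j + 1) k] at h2
    qify at h2 ⊢
    push_cast at h
    rw [← sub_eq_iff_eq_add.mpr h.symm]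
    rw [mul_sub, sub_eq_iff_eq_add]
    rw [show ((j : ℚ) + (k + 1) + 2) = j + 1 + k + 2 by ring, h2]
    rw [Nat.cast_choose ℚ (show j ≤ j + (k + 1) by omega),
      Nat.cast_choose ℚ (show j + 1 ≤ j + (k + 1) + j + 2 by omega),
      Nat.cast_choose ℚ (show j + 1 ≤ j + 1 + k by omega),
      Nat.cast_choose ℚ (show j + 1 + 1 ≤ j + 1 + k + (j + 1) + 2 by omega)]
    simp only [GQ]
    rw [show 0 + 2 * (j + 1) + (k + 1) = 2 * j + k + 3 by ring,
      show 0 + 1 + (j + 1) = j + 1 + 1 by ring,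
      show j + (k + 1) - j = k + 1 by omega,
      show j + (k + 1) + j + 2 - (j + 1) = j + k + 2 by omega,
      show j + 1 + k - (j + 1) = k by omega,
      show j + 1 + k + (j + 1) + 2 - (j + 1 + 1) = j + k + 2 by omega,
      show j + (k + 1) + j + 2 = 2 * j + k + 3 by ring,
      show j + 1 + k + (j + 1) + 2 = 2 * j + k + 3 + 1 by ring,
      show j + (k + 1) = j + k + 1 by ring,
      show j + 1 + k = j + k + 1 by ring,
      Nat.factorial_succ (j + k + 1), Nat.factorial_succ (2 * j + k + 3),
      Nat.factorial_succ (j + 1), Nat.factorial_succ j, Nat.factorial_succ k]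
    push_cast
    field_simp
    ring

def SP : ℕ → List (Fin 3) → Prop
  | a, [] => a = 0
  | a, c :: l => if c = 0 then SP (a + 1) l else if c = 1 then 0 < a ∧ SP (a - 1) l
      else 0 < a ∧ SP a l

theorem SP_iff (l : List (Fin 3)) : ∀ a : ℕ, SP a l ↔
    ((a + l.count 0 = l.count 1 ∧ ∀ p, p <+: l → p.count 1 ≤ a + p.count 0) ∧
      ∀ p q, l = p ++ (2 : Fin 3) :: q → p.count 1 < a + p.count 0) := by
  induction l with
  | nil => intro a; simp [SP]
  | cons c l ih =>
    intro a
    have key : ((a + (c :: l).count 0 = (c :: l).count 1 ∧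
        ∀ p, p <+: (c :: l) → p.count 1 ≤ a + p.count 0) ∧
      ∀ p q, (c :: l) = p ++ (2 : Fin 3) :: q → p.count 1 < a + p.count 0) ↔
      ((a + (c :: l).count 0 = (c :: l).count 1 ∧
        ∀ p, p <+: l → (c :: p).count 1 ≤ a + (c :: p).count 0) ∧
      (c = 2 → 0 < a) ∧ ∀ p q, l = p ++ (2 : Fin 3) :: q → (c :: p).count 1 < a + (c :: p).count 0) := by
      constructor
      · rintro ⟨⟨h1, h2⟩, h3⟩
        refine ⟨⟨h1, fun p hp => h2 _ (by simpa using hp)⟩, ?_, fun p q h => h3 _ q (by simp [h])⟩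
        rintro rfl
        simpa using h3 [] l rfl
      · rintro ⟨⟨h1, h2⟩, h3, h4⟩
        refine ⟨⟨h1, ?_⟩, ?_⟩
        · intro p hp
          cases p with
          | nil => simp
          | cons d p =>
            rw [List.cons_prefix_cons] at hp
            obtain ⟨rfl, hp⟩ := hp
            exact h2 p hp
        · intro p q h
          cases p with
          | nil => simp at h; simpa using h3 h.1
          | cons d p =>
            simp at h
            obtain ⟨rfl, h⟩ := h
            exact h4 p q h
    rw [key]
    fin_cases c
    · simp only [SP, ih]
      simp [List.count_cons]
      simp only [add_assoc, add_comm, add_left_comm]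
    · simp only [SP, ih]
      simp [List.count_cons]
      constructor
      · rintro ⟨h0, ⟨h1, h2⟩, h3⟩
        refine ⟨⟨by omega, fun p hp => ?_⟩, fun p q h => ?_⟩
        · have := h2 p hp; omega
        · have := h3 p q h; omega
      · rintro ⟨⟨h1, h2⟩, h3⟩
        have h0 : 0 < a := by have := h2 [] (by simp); simpa using this
        refine ⟨h0, ⟨by omega, fun p hp => ?_⟩, fun p q h => ?_⟩
        · have := h2 p hp; omega
        · have := h3 p q h; omega
    · simp only [SP, ih]
      simp [List.count_cons]
      tauto

theorem little_iff (l : List (Fin 3)) : IsLittleSchroeder l ↔ SP 0 l := by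
  rw [SP_iff]
  simp [IsLittleSchroeder, IsLargeSchroeder]

theorem mem_FS : ∀ (a i k : ℕ) (l : List (Fin 3)),
    l ∈ FS a i k ↔ SP a l ∧ l.count 0 = i ∧ l.count 2 = k
  | 0, 0, 0, l => by
    cases l with
    | nil => simp [FS, SP]
    | cons c l => fin_cases c <;> simp [FS, SP]
  | 0, 0, _ + 1, l => by
    cases l with
    | nil => simp [FS, SP]
    | cons c l => fin_cases c <;> simp [FS, SP]
  | 0, i + 1, k, l => by
    cases l with
    | nil => simp [FS]
    | cons c l => fin_cases c <;> simp [FS, SP, mem_FS 1 i k]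
  | a + 1, 0, 0, l => by
    cases l with
    | nil => simp [FS, SP]
    | cons c l => fin_cases c <;> simp [FS, SP, mem_FS a 0 0]
  | a + 1, 0, k + 1, l => by
    cases l with
    | nil => simp [FS]
    | cons c l => fin_cases c <;> simp [FS, SP, mem_FS a 0 (k + 1), mem_FS (a + 1) 0 k]
  | a + 1, i + 1, 0, l => by
    cases l with
    | nil => simp [FS]
    | cons c l => fin_cases c <;> simp [FS, SP, mem_FS a (i + 1) 0, mem_FS (a + 2) i 0]
  | a + 1, i + 1, k + 1, l => by
    cases l with
    | nil => simp [FS]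
    | cons c l => fin_cases c <;> simp [FS, SP, mem_FS a (i + 1) (k + 1), mem_FS (a + 2) i (k + 1), mem_FS (a + 1) (i + 1) k]
termination_by a i k => a + 2 * i + k

theorem little_card (r : ℕ) : Nat.card {l : List (Fin 3) //
        IsLittleSchroeder l ∧ schroederSemiLength l = r} =
    ∑ i ∈ Finset.range (r + 1), FC 0 i (r - i) := by
  have h : ∀ l, l ∈ (Finset.range (r + 1)).biUnion (fun i => FS 0 i (r - i)) ↔
      (IsLittleSchroeder l ∧ schroederSemiLength l = r) := by
    intro l
    simp only [Finset.mem_biUnion, mem_FS, little_iff, schroederSemiLength, Finset.mem_range]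
    constructor
    · rintro ⟨i, hi, h1, h2, h3⟩
      exact ⟨h1, by omega⟩
    · rintro ⟨h1, h2⟩
      exact ⟨l.count 0, by omega, h1, rfl, by omega⟩
  rw [← Nat.card_congr (Equiv.subtypeEquivRight h), Nat.card_eq_fintype_card, Fintype.card_coe, Finset.card_biUnion]
  · rfl
  · intro i _ j _ hij
    refine Finset.disjoint_left.mpr ?_
    intro l h1 h2
    simp only [mem_FS] at h1 h2
    omega

mutual
def DA : ℕ → ℕ → Finset (List Bool)
  | 0, 0 => {[]}
  | x + 1, 0 => ((DA x 0).image (List.cons false)).image (List.cons true)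
  | 0, y + 1 => (((DB 0 y).image (List.cons false)).image (List.cons true)).image (List.cons true)
  | x + 1, y + 1 =>
    (((DA x (y + 1)).image (List.cons false)) ∪
      (((DB (x + 1) y).image (List.cons false)).image (List.cons true))).image (List.cons true)
termination_by x y => 2 * (x + y)
def DB : ℕ → ℕ → Finset (List Bool)
  | x, 0 => (DA x 0).image (List.cons false)
  | x, y + 1 => (DA x (y + 1)).image (List.cons false) ∪
     ((DB x y).image (List.cons false)).image (List.cons true)
termination_by x y => 2 * (x + y) + 1
end

theorem cA0 : ∀ x, (DA x 0).card = 1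
  | 0 => by simp [DA]
  | x + 1 => by rw [DA, card_cons, card_cons, cA0 x]

mutual
theorem cA : ∀ x y, (DA x (y + 1)).card =
    ∑ j ∈ Finset.range (y + 1), y.choose j * (x + j + 1).choose (j + 1)
  | 0, y => by
    rw [DA, card_cons, card_cons, card_cons, cB 0 y]
    simp
  | x + 1, y => by
    rw [DA, card_cons, Finset.card_union_of_disjoint (disj_cons _ _ (by decide) _ _), card_cons,
      card_cons, card_cons, cA x y, cB (x + 1) y, ← Finset.sum_add_distrib]
    refine Finset.sum_congr rfl fun j _ => ?_
    rw [← mul_add, show x + 1 + j + 1 = (x + j + 1) + 1 by ring, Nat.choose_succ_succ (x + j + 1) j,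
      show x + 1 + j = x + j + 1 by ring, add_comm]
termination_by x y => 2 * (x + (y + 1))
theorem cB : ∀ x y, (DB x y).card =
    ∑ j ∈ Finset.range (y + 1), y.choose j * (x + j).choose j
  | x, 0 => by
    rw [DB, card_cons, cA0]
    simp
  | x, y + 1 => by
    rw [DB, Finset.card_union_of_disjoint (disj_cons _ _ (by decide) _ _), card_cons,
      card_cons, card_cons, cA x y, cB x y, Finset.sum_range_succ' _ (y + 1)]
    simp only [Nat.choose_succ_succ y, add_mul, Finset.sum_add_distrib]
    rw [add_assoc]
    congr 1
    rw [Finset.sum_range_succ' _ y, Finset.sum_range_succ _ y]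
    simp [add_assoc]
termination_by x y => 2 * (x + y) + 1
end

theorem lsum_cons (b : Bool) (l : List Bool) : lsum (b :: l) = stepVal b + lsum l := by
  simp [lsum]

theorem lsum_nil : lsum [] = 0 := by simp [lsum]

theorem sv_t : stepVal true = 1 := rfl
theorem sv_f : stepVal false = -1 := rfl

def DD (a : ℤ) (l : List Bool) : Prop :=
  a + lsum l = 0 ∧ ∀ p, p <+: l → 0 ≤ a + lsum p ∧ a + lsum p ≤ 2

theorem DD_nil (a : ℤ) : DD a [] ↔ a = 0 := by
  simp [DD, lsum_nil]; omega

theorem DD_cons (a : ℤ) (b : Bool) (l : List Bool) :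
    DD a (b :: l) ↔ (0 ≤ a ∧ a ≤ 2) ∧ DD (a + stepVal b) l := by
  constructor
  · rintro ⟨h1, h2⟩
    refine ⟨by simpa [lsum_nil] using h2 [] (by simp), by rw [← h1, lsum_cons]; ring, fun p hp => ?_⟩
    have := h2 (b :: p) (by simpa using hp)
    rwa [lsum_cons, ← add_assoc] at this
  · rintro ⟨h0, h1, h2⟩
    refine ⟨by rw [← h1, lsum_cons]; ring, fun p hp => ?_⟩
    cases p with
    | nil => simpa [lsum_nil] using h0
    | cons d p =>
      rw [List.cons_prefix_cons] at hp
      obtain ⟨rfl, hp⟩ := hp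
      rw [lsum_cons, ← add_assoc]
      exact h2 p hp

def PS (l : List Bool) (h : ℤ) : Set (List Bool × List Bool) :=
  {pq | l = pq.1 ++ true :: false :: pq.2 ∧ lsum pq.1 + 1 = h}

theorem lpc_eq (l : List Bool) (h : ℤ) : listPeakCount l h = (PS l h).ncard := rfl

theorem PS_nil (h : ℤ) : PS [] h = ∅ := by
  ext ⟨p, q⟩; simp [PS]

theorem PS_cons (b : Bool) (l : List Bool) (h : ℤ) :
    PS (b :: l) h = (fun pq : List Bool × List Bool => (b :: pq.1, pq.2)) '' PS l (h - stepVal b) ∪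
      {pq | pq.1 = [] ∧ b = true ∧ l = false :: pq.2 ∧ h = 1} := by
  ext ⟨p, q⟩
  cases p with
  | nil => simp [PS, lsum_nil]; tauto
  | cons c p =>
    simp only [PS, Set.mem_ofPred_eq, Set.mem_union, Set.mem_image, Prod.mk.injEq, Prod.exists, List.cons_append,
      List.cons.injEq, lsum_cons, reduceCtorEq, false_and, or_false]
    constructor
    · rintro ⟨⟨rfl, h1⟩, h2⟩
      exact ⟨p, q, ⟨h1, by omega⟩, by simp⟩
    · rintro ⟨p', q', ⟨h1, h2⟩, ⟨rfl, rfl⟩, rfl⟩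
      exact ⟨⟨rfl, h1⟩, by omega⟩

theorem inj_c (b : Bool) : Function.Injective (fun pq : List Bool × List Bool => (b :: pq.1, pq.2)) := by
  rintro ⟨p, q⟩ ⟨p', q'⟩ h
  simpa using h

theorem PS_fin (l : List Bool) : ∀ h, (PS l h).Finite := by
  induction l with
  | nil => intro h; simp [PS_nil]
  | cons b l ih =>
    intro h
    rw [PS_cons]
    refine Set.Finite.union ((ih _).image _) ?_
    refine Set.Finite.subset (Set.finite_singleton ([], l.tail)) ?_
    rintro ⟨p, q⟩ ⟨h1, h2, h3, h4⟩
    simp at h1 h3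
    simp [h1, h3]

theorem lpc_nil (h : ℤ) : listPeakCount [] h = 0 := by
  simp [lpc_eq, PS_nil]

theorem lpc_f (l : List Bool) (h : ℤ) : listPeakCount (false :: l) h = listPeakCount l (h + 1) := by
  rw [lpc_eq, PS_cons]
  simp [Set.ncard_image_of_injective _ (inj_c false), lpc_eq, sv_f]

theorem lpc_tt (l : List Bool) (h : ℤ) :
    listPeakCount (true :: true :: l) h = listPeakCount (true :: l) (h - 1) := by
  rw [lpc_eq, PS_cons]
  simp [Set.ncard_image_of_injective _ (inj_c true), lpc_eq, sv_t]

theorem lpc_tf (l : List Bool) (h : ℤ) :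
    listPeakCount (true :: false :: l) h = listPeakCount l h + if h = 1 then 1 else 0 := by
  rw [lpc_eq, PS_cons]
  have f1 : ((fun pq : List Bool × List Bool => (true :: pq.1, pq.2)) ''
      PS (false :: l) (h - stepVal true)).Finite := (PS_fin _ _).image _
  have f2 : {pq : List Bool × List Bool | pq.1 = [] ∧ true = true ∧ false :: l = false :: pq.2 ∧ h = 1}.Finite := by
    refine Set.Finite.subset (Set.finite_singleton ([], l)) ?_
    rintro ⟨p, q⟩ ⟨h1, h2, h3, h4⟩
    simp at h1 h3
    simp [h1, h3]
  split_ifs with hh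
  · rw [Set.ncard_union_eq ?_ f1 f2, Set.ncard_image_of_injective _ (inj_c true), ← lpc_eq, lpc_f, sv_t]
    · congr 1
      · congr 1; ring
      · rw [Set.ncard_eq_one]
        refine ⟨([], l), ?_⟩
        ext ⟨p, q⟩
        simp [hh]
        tauto
    · rw [Set.disjoint_left]
      rintro _ ⟨pq, _, rfl⟩ h
      simp at h
  · simp [hh, Set.ncard_image_of_injective _ (inj_c true), ← lpc_eq, lpc_f, sv_t]

def MA (l : List Bool) (x y : ℕ) : Prop := DD 0 l ∧ listPeakCount l 1 = x ∧ listPeakCount l 2 = y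
def MB (l : List Bool) (x y : ℕ) : Prop := DD 1 l ∧ listPeakCount l 0 = x ∧ listPeakCount l 1 = y

theorem MA_nil (x y : ℕ) : MA [] x y ↔ x = 0 ∧ y = 0 := by
  simp [MA, DD_nil, lpc_nil]; omega
theorem MA_f (l) (x y : ℕ) : ¬ MA (false :: l) x y := by
  rintro ⟨h, -⟩
  rw [DD_cons, sv_f] at h
  have := h.2.2 [] (by simp)
  simp [lsum_nil] at this
theorem MA_t (x y : ℕ) : ¬ MA [true] x y := by
  simp [MA, DD_cons, DD_nil, sv_t]
theorem MA_tt (x y : ℕ) : ¬ MA [true, true] x y := by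
  simp [MA, DD_cons, DD_nil, sv_t]
theorem MA_ttt (l) (x y : ℕ) : ¬ MA (true :: true :: true :: l) x y := by
  rintro ⟨h, -⟩
  simp only [DD_cons, sv_t] at h
  have := h.2.2.2.2 [] (by simp)
  simp [lsum_nil] at this
theorem MA_tf (l) (x y : ℕ) : MA (true :: false :: l) x y ↔ ∃ x', x = x' + 1 ∧ MA l x' y := by
  simp only [MA, DD_cons, sv_t, sv_f, lpc_tf]
  norm_num
  constructor
  · rintro ⟨h, h1, h2⟩
    exact ⟨_, h1.symm, h, rfl, h2⟩
  · rintro ⟨x', rfl, h, rfl, h2⟩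
    exact ⟨h, rfl, h2⟩
theorem MA_ttf (l) (x y : ℕ) : MA (true :: true :: false :: l) x y ↔ ∃ y', y = y' + 1 ∧ MB l x y' := by
  simp only [MA, MB, DD_cons, sv_t, sv_f, lpc_tf, lpc_tt]
  norm_num
  constructor
  · rintro ⟨h, h1, h2⟩
    exact ⟨_, h2.symm, h, h1, rfl⟩
  · rintro ⟨x', rfl, h, h1, rfl⟩
    exact ⟨h, h1, rfl⟩
theorem MB_nil (x y : ℕ) : ¬ MB [] x y := by simp [MB, DD_nil]
theorem MB_f (l) (x y : ℕ) : MB (false :: l) x y ↔ MA l x y := by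
  simp only [MB, MA, DD_cons, sv_f, lpc_f]
  norm_num
theorem MB_t (x y : ℕ) : ¬ MB [true] x y := by
  simp [MB, DD_cons, DD_nil, sv_t]
theorem MB_tt (l) (x y : ℕ) : ¬ MB (true :: true :: l) x y := by
  rintro ⟨h, -⟩
  simp only [DD_cons, sv_t] at h
  have := h.2.2.2 [] (by simp)
  simp [lsum_nil] at this
theorem MB_tf (l) (x y : ℕ) : MB (true :: false :: l) x y ↔ ∃ y', y = y' + 1 ∧ MB l x y' := by
  simp only [MB, DD_cons, sv_t, sv_f, lpc_tf]
  norm_num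
  constructor
  · rintro ⟨h, h1, h2⟩
    exact ⟨_, h2.symm, h, h1, rfl⟩
  · rintro ⟨x', rfl, h, h1, rfl⟩
    exact ⟨h, h1, rfl⟩

mutual
theorem mem_DA : ∀ (l : List Bool) (x y : ℕ), l ∈ DA x y ↔ MA l x y
  | [], x, y => by rw [MA_nil]; cases x <;> cases y <;> simp [DA]
  | false :: l, x, y => by simp only [MA_f, iff_false]; cases x <;> cases y <;> simp [DA]
  | [true], x, y => by simp only [MA_t, iff_false]; cases x <;> cases y <;> simp [DA]
  | [true, true], x, y => by simp only [MA_tt, iff_false]; cases x <;> cases y <;> simp [DA]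
  | true :: true :: true :: l, x, y => by
    simp only [MA_ttt, iff_false]; cases x <;> cases y <;> simp [DA]
  | true :: false :: l, x, y => by
    simp only [MA_tf, ← mem_DA l]; cases x <;> cases y <;> simp [DA]
  | true :: true :: false :: l, x, y => by
    simp only [MA_ttf, ← mem_DB l]; cases x <;> cases y <;> simp [DA]
termination_by l => l.length
theorem mem_DB : ∀ (l : List Bool) (x y : ℕ), l ∈ DB x y ↔ MB l x y
  | [], x, y => by simp only [MB_nil, iff_false]; cases y <;> simp [DB]
  | false :: l, x, y => by simp only [MB_f, ← mem_DA l]; cases y <;> simp [DB]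
  | [true], x, y => by simp only [MB_t, iff_false]; cases y <;> simp [DB]
  | true :: true :: l, x, y => by
    simp only [MB_tt, iff_false]; cases y <;> simp [DB]
  | true :: false :: l, x, y => by
    simp only [MB_tf, ← mem_DB l]; cases y <;> simp [DB]
termination_by l => l.length
end

/-- For every integer `r ≥ 0`, the number of Dyck paths of
height at most `2` having exactly `r` peaks of height `1` and exactly `r`
peaks of height `2` equals `(r+1) * s_r`, where `s_r` is the number of little
Schröder paths of semi-length `r`. -/
theorem stmt_13 (r : ℕ) :
    Nat.card {l : List Bool // IsDyckList l ∧ (∀ p, p <+: l → lsum p ≤ 2) ∧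
        listPeakCount l 1 = r ∧ listPeakCount l 2 = r} =
      (r + 1) * Nat.card {l : List (Fin 3) //
        IsLittleSchroeder l ∧ schroederSemiLength l = r} := by
  have h : ∀ l, l ∈ DA r r ↔ (IsDyckList l ∧ (∀ p, p <+: l → lsum p ≤ 2) ∧
        listPeakCount l 1 = r ∧ listPeakCount l 2 = r) := by
    intro l
    rw [mem_DA, MA, DD, IsDyckList]
    simp only [zero_add]
    constructor
    · rintro ⟨⟨h1, h2⟩, h3⟩
      exact ⟨⟨h1, fun p hp => (h2 p hp).1⟩, fun p hp => (h2 p hp).2, h3⟩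
    · rintro ⟨⟨h1, h2⟩, h4, h3⟩
      exact ⟨⟨h1, fun p hp => ⟨h2 p hp, h4 p hp⟩⟩, h3⟩
  rw [← Nat.card_congr (Equiv.subtypeEquivRight h), Nat.card_eq_fintype_card, Fintype.card_coe,
    little_card]
  cases r with
  | zero => simp [DA, FC000]
  | succ m =>
    rw [cA, Finset.sum_range_succ' _ (m + 1), Nat.sub_zero, FC00, add_zero, Finset.mul_sum]
    refine Finset.sum_congr rfl fun j hj => ?_
    have hj' : j ≤ m := by simpa [Nat.lt_succ_iff] using hj
    obtain ⟨k, rfl⟩ := Nat.exists_eq_add_of_le hj'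
    have := FC_closed k j
    rw [show j + k + 1 - (j + 1) = k by omega, show j + k + 1 + 1 = j + k + 2 by ring, this,
      show j + k + 1 + j + 1 = j + k + j + 2 by ring]
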